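/- Let G be a class of functions from ℝ^d to ℝ and let D_n = ((x_i, y_i))_{i=1..n} be a finite data set with y_i ≠ 0 for all i. For p ≥ 1, define the empirical L_p norm ‖f₁ - f₂‖_{p,D_n} = ((1/n)·Σ_i |f₁(x_i,y_i) - f₂(x_i,y_i)|^p)^{1/p}. Then for every ε > 0, N(ε, H(G, l_MAPE), ‖·‖_{p,D_n}) ≤ N(ε·min_{1≤i≤n}|y_i|, H(G, l_MAE), ‖·‖_{p,D_n}). -/

import Mathlib

open ENNReal Set

/-- The `ε`-covering number of a class `F` with respect to a real-valued
dissimilarity `κ`: the size of the smallest finite subset `S ⊆ F` such that every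
element of `F` is at dissimilarity `< ε` of some element of `S` (`⊤` if no such
finite cover exists). -/
noncomputable def coveringNumber {α : Type*} (ε : ℝ) (F : Set α) (κ : α → α → ℝ) : ℕ∞ :=
  sInf {n : ℕ∞ | ∃ S : Finset α, (S.card : ℕ∞) = n ∧ ↑S ⊆ F ∧
    ∀ f ∈ F, ∃ f' ∈ S, κ f f' < ε}

/-- The empirical `L_p` dissimilarity on functions of the data, for a data set
`z : Fin n → (ℝ^d) × ℝ`. -/
noncomputable def empLpDist {d n : ℕ} (p : ℝ) (z : Fin n → (Fin d → ℝ) × ℝ)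
    (h₁ h₂ : (Fin d → ℝ) × ℝ → ℝ) : ℝ :=
  ((1 / (n : ℝ)) * ∑ i, |h₁ (z i) - h₂ (z i)| ^ p) ^ (1 / p)

/-! On the sample, passing from MAE to MAPE divides each loss function by `|y|`. Since
`|yᵢ| ≥ m := min |yᵢ|`, this contracts empirical `L_p` distances by a factor of at least `m`, so
dividing the centres of an `ε * m`-cover of the MAE class by `|y|` gives an `ε`-cover of the MAPE
class. -/

theorem coveringNumber_image_le {α β : Type*} {F : Set α} {κ : α → α → ℝ} {κ' : β → β → ℝ}
    {δ ε : ℝ} (Φ : α → β)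
    (hΦ : ∀ f ∈ F, ∀ f' ∈ F, κ f f' < δ → κ' (Φ f) (Φ f') < ε) :
    coveringNumber ε (Φ '' F) κ' ≤ coveringNumber δ F κ := by
  classical
  refine le_sInf ?_
  rintro _ ⟨S, rfl, hSF, hcover⟩
  have image_subset : (S.image Φ : Set β) ⊆ Φ '' F := by
    rw [Finset.coe_image]
    exact image_mono hSF
  have image_covers : ∀ f ∈ Φ '' F, ∃ f' ∈ S.image Φ, κ' f f' < ε := by
    rintro _ ⟨f, hf, rfl⟩
    obtain ⟨f', hf', hlt⟩ := hcover f hf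
    exact ⟨Φ f', Finset.mem_image_of_mem Φ hf', hΦ f hf f' (hSF hf') hlt⟩
  calc coveringNumber ε (Φ '' F) κ' ≤ (S.image Φ).card :=
        sInf_le ⟨S.image Φ, rfl, image_subset, image_covers⟩
    _ ≤ S.card := Nat.cast_le.mpr Finset.card_image_le

section LpMean

open scoped BigOperators

variable {ι : Type*} [Fintype ι] {p : ℝ}

/-- The `L_p` norm of a finite family of reals with respect to the uniform probability measure on
its index set; for `0 < p < 1` it is only a quasi-norm. -/
noncomputable def lpMean (p : ℝ) (a : ι → ℝ) : ℝ :=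
  (𝔼 i, |a i| ^ p) ^ (1 / p)

theorem lpMean_le_lpMean {a b : ι → ℝ} (hp : 0 ≤ p) (hab : ∀ i, |a i| ≤ |b i|) :
    lpMean p a ≤ lpMean p b := by
  unfold lpMean
  gcongr ((𝔼 i, ?_ ^ p) ^ (1 / p)) with i
  exact hab i

theorem lpMean_div_const (hp : p ≠ 0) (a : ι → ℝ) (c : ℝ) :
    lpMean p (fun i => a i / c) = lpMean p a / |c| := by
  have expect_nonneg : 0 ≤ 𝔼 i, |a i| ^ p :=
    Finset.expect_nonneg fun i _ => Real.rpow_nonneg (abs_nonneg (a i)) p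
  calc lpMean p (fun i => a i / c) = ((𝔼 i, |a i| ^ p) / |c| ^ p) ^ (1 / p) := by
        simp only [lpMean, abs_div, Real.div_rpow (abs_nonneg _) (abs_nonneg c), Finset.expect_div]
    _ = lpMean p a / |c| := by
        rw [Real.div_rpow expect_nonneg (by positivity), one_div,
          Real.rpow_rpow_inv (abs_nonneg c) hp, lpMean, one_div]

end LpMean

section EmpiricalLpDist

variable {ι X : Type*} [Fintype ι] {p : ℝ}

/-- The empirical `L_p` dissimilarity `‖h₁ - h₂‖_{p,D}` of real functions on an arbitrary space,
for a finite sample `z`. -/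
noncomputable def empiricalLpDist (p : ℝ) (z : ι → X) (h₁ h₂ : X → ℝ) : ℝ :=
  lpMean p fun i => h₁ (z i) - h₂ (z i)

theorem empLpDist_eq_empiricalLpDist {d n : ℕ} (p : ℝ) (z : Fin n → (Fin d → ℝ) × ℝ) :
    empLpDist p z = empiricalLpDist p z := by
  ext h₁ h₂
  rw [empLpDist, empiricalLpDist, lpMean, Fintype.expect_eq_sum_div_card, Fintype.card_fin,
    one_div_mul_eq_div]

theorem empiricalLpDist_div_le {z : ι → X} {w : X → ℝ} {m : ℝ} (hp : 0 < p) (hm : 0 < m)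
    (hw : ∀ i, m ≤ |w (z i)|) (h₁ h₂ : X → ℝ) :
    empiricalLpDist p z (h₁ / w) (h₂ / w) ≤ empiricalLpDist p z h₁ h₂ / m := by
  have pointwise_le (i : ι) :
      |(h₁ / w) (z i) - (h₂ / w) (z i)| ≤ |(h₁ (z i) - h₂ (z i)) / m| := by
    rw [Pi.div_apply, Pi.div_apply, ← sub_div, abs_div, abs_div, abs_of_pos hm]
    gcongr
    exact hw i
  calc empiricalLpDist p z (h₁ / w) (h₂ / w)
      ≤ lpMean p (fun i => (h₁ (z i) - h₂ (z i)) / m) := lpMean_le_lpMean hp.le pointwise_le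
    _ = empiricalLpDist p z h₁ h₂ / m := by
        rw [lpMean_div_const hp.ne', abs_of_pos hm, empiricalLpDist]

theorem coveringNumber_image_div_le {z : ι → X} {w : X → ℝ} {m : ℝ} (hp : 0 < p) (hm : 0 < m)
    (hw : ∀ i, m ≤ |w (z i)|) (F : Set (X → ℝ)) (ε : ℝ) :
    coveringNumber ε ((· / w) '' F) (empiricalLpDist p z) ≤
      coveringNumber (ε * m) F (empiricalLpDist p z) :=
  coveringNumber_image_le (· / w) fun h₁ _ h₂ _ hlt =>
    (empiricalLpDist_div_le hp hm hw h₁ h₂).trans_lt ((div_lt_iff₀ hm).mpr hlt)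

theorem covering_number_MAPE_le_MAE_Lp_general [Nonempty ι] (G : Set (X → ℝ)) (z : ι → X × ℝ)
    (hz : ∀ i, (z i).2 ≠ 0) (hp : 0 < p) (ε : ℝ) :
    coveringNumber ε ((fun (g : X → ℝ) (q : X × ℝ) => |g q.1 - q.2| / |q.2|) '' G)
      (empiricalLpDist p z) ≤
    coveringNumber (ε * ⨅ i, |(z i).2|) ((fun (g : X → ℝ) (q : X × ℝ) => |g q.1 - q.2|) '' G)
      (empiricalLpDist p z) := by
  have iInf_pos : 0 < ⨅ i, |(z i).2| := by
    obtain ⟨i, hi⟩ := exists_eq_ciInf_of_finite (f := fun i => |(z i).2|)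
    exact hi ▸ abs_pos.mpr (hz i)
  have iInf_le (i : ι) : ⨅ j, |(z j).2| ≤ |(|(z i).2|)| := by
    rw [abs_abs]
    exact ciInf_le (finite_range _).bddBelow i
  have cover_le := coveringNumber_image_div_le (w := fun q : X × ℝ => |q.2|) hp iInf_pos iInf_le
    ((fun (g : X → ℝ) (q : X × ℝ) => |g q.1 - q.2|) '' G) ε
  rwa [image_image] at cover_le

end EmpiricalLpDist

theorem covering_number_MAPE_le_MAE_Lp {d n : ℕ} (hn : 0 < n)
    (G : Set ((Fin d → ℝ) → ℝ)) (z : Fin n → (Fin d → ℝ) × ℝ)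
    (hz : ∀ i, (z i).2 ≠ 0) (p : ℝ) (hp : 1 ≤ p) (ε : ℝ) (hε : 0 < ε) :
    coveringNumber ε
      ((fun g : (Fin d → ℝ) → ℝ => fun q : (Fin d → ℝ) × ℝ => |g q.1 - q.2| / |q.2|) '' G)
      (empLpDist p z)
    ≤ coveringNumber (ε * ⨅ i, |(z i).2|)
      ((fun g : (Fin d → ℝ) → ℝ => fun q : (Fin d → ℝ) × ℝ => |g q.1 - q.2|) '' G)
      (empLpDist p z) := by
  have : Nonempty (Fin n) := Fin.pos_iff_nonempty.mp hn
  simpa only [empLpDist_eq_empiricalLpDist] using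
    covering_number_MAPE_le_MAE_Lp_general G z hz (zero_lt_one.trans_le hp) ε
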